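/- For every integer n ≥ 6, no two-element subset of the vertex set of the convex polytope graph Δ_n is a resolving set of Δ_n; equivalently, for every pair of vertices a, b of Δ_n there exist two distinct vertices u, v with d(a,u) = d(a,v) and d(b,u) = d(b,v). -/

import Mathlib

/-- Vertices of the heptagonal circular ladder: four families indexed by `ZMod n`. -/
inductive HCLVertex (n : ℕ) : Type
  | p (t : ZMod n) : HCLVertex n
  | q (t : ZMod n) : HCLVertex n
  | r (t : ZMod n) : HCLVertex n
  | s (t : ZMod n) : HCLVertex n
deriving DecidableEq

/-- Base relation giving the edges of the heptagonal circular ladder `Γ_n`: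
`p_t p_{t+1}`, `p_t q_t`, `q_t r_t`, `r_t s_t`, `s_t r_{t+1}` (indices mod `n`). -/
def gammaRel (n : ℕ) : HCLVertex n → HCLVertex n → Prop
  | .p t, .p u => u = t + 1
  | .p t, .q u => u = t
  | .q t, .r u => u = t
  | .r t, .s u => u = t
  | .s t, .r u => u = t + 1
  | _, _ => False

/-- The heptagonal circular ladder `Γ_n`. -/
def Gamma (n : ℕ) : SimpleGraph (HCLVertex n) :=
  SimpleGraph.fromRel (gammaRel n)

/-- The extra edges `r_t q_{t+1}` added to `Γ_n` to obtain `Δ_n`. -/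
def deltaRel (n : ℕ) : HCLVertex n → HCLVertex n → Prop
  | .r t, .q u => u = t + 1
  | _, _ => False

/-- The convex polytope graph `Δ_n`, obtained from `Γ_n` by adding the edges `r_t q_{t+1}`. -/
def Delta (n : ℕ) : SimpleGraph (HCLVertex n) :=
  SimpleGraph.fromRel (fun v w => gammaRel n v w ∨ deltaRel n v w)

/-- `W` is a resolving set of `G`: every pair of distinct vertices is distinguished by
its distance to some vertex of `W`. -/
def IsResolving {V : Type*} (G : SimpleGraph V) (W : Set V) : Prop :=
  ∀ u v : V, u ≠ v → ∃ w ∈ W, G.dist w u ≠ G.dist w v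

/-- Distance from a vertex `x` to an edge `e = yz`: `min (d x y) (d x z)`. -/
noncomputable def edgeDist {V : Type*} (G : SimpleGraph V) (x : V) (e : Sym2 V) : ℕ :=
  Sym2.lift ⟨fun y z => min (G.dist x y) (G.dist x z), fun y z => min_comm _ _⟩ e

/-- `W` is an edge resolving set of `G`: every pair of distinct edges is distinguished by
its distance to some vertex of `W`. -/
def IsEdgeResolving {V : Type*} (G : SimpleGraph V) (W : Set V) : Prop :=
  ∀ e ∈ G.edgeSet, ∀ f ∈ G.edgeSet, e ≠ f → ∃ w ∈ W, edgeDist G w e ≠ edgeDist G w f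

/-- A function vanishing exactly at `a` that is 1-Lipschitz along edges and can be decreased
along an edge wherever it is positive is the distance to `a`. -/
theorem SimpleGraph.dist_eq_of_lipschitz_of_descent {V : Type*} {G : SimpleGraph V} {a : V}
    (f : V → ℕ) (ha : f a = 0) (hz : ∀ v, f v = 0 → v = a)
    (hl : ∀ u v, G.Adj u v → f v ≤ f u + 1)
    (hd : ∀ v, 0 < f v → ∃ w, G.Adj w v ∧ f w < f v) (v : V) :
    G.dist a v = f v := by
  have upper : ∀ k v, f v ≤ k → ∃ w : G.Walk a v, w.length ≤ k := by
    intro k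
    induction k with
    | zero =>
      intro v hv
      obtain rfl := hz v (by omega)
      exact ⟨.nil, by simp⟩
    | succ k ih =>
      intro v hv
      rcases Nat.eq_zero_or_pos (f v) with h0 | h0
      · obtain rfl := hz v h0
        exact ⟨.nil, by simp⟩
      · obtain ⟨u, hu, hlt⟩ := hd v h0
        obtain ⟨w, hw⟩ := ih u (by omega)
        exact ⟨w.concat hu, by simpa using hw⟩
  have lower : ∀ {u v : V} (w : G.Walk u v), f v ≤ f u + w.length := by
    intro u v w
    induction w with
    | nil => simp
    | cons h w ih =>
      have := hl _ _ h
      simp only [SimpleGraph.Walk.length_cons]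
      omega
  obtain ⟨w, hw⟩ := upper (f v) v le_rfl
  refine le_antisymm ((SimpleGraph.dist_le w).trans hw) ?_
  obtain ⟨w', hw'⟩ := SimpleGraph.Reachable.exists_walk_length_eq_dist ⟨w⟩
  have := lower w'
  omega

namespace HCLVertex

variable {n : ℕ}

/-- The number of steps from `i` to `t` in the positive direction around `ZMod n`. -/
def offset (i t : ZMod n) : ℕ := (t - i).val

theorem offset_lt [NeZero n] (i t : ZMod n) : offset i t < n := ZMod.val_lt _

theorem offset_self (i : ZMod n) : offset i i = 0 := by simp [offset]

theorem eq_of_offset_eq_zero {i t : ZMod n} (h : offset i t = 0) : t = i :=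
  sub_eq_zero.mp ((ZMod.val_eq_zero _).mp h)

theorem offset_succ (hn : 2 ≤ n) (i t : ZMod n) :
    offset i (t + 1) = offset i t + 1 ∨ (offset i t + 1 = n ∧ offset i (t + 1) = 0) := by
  have : NeZero n := ⟨by omega⟩
  have : Fact (1 < n) := ⟨hn⟩
  have hlt := offset_lt i t
  have h : offset i (t + 1) = (offset i t + 1) % n := by
    rw [offset, add_sub_right_comm, ZMod.val_add, ZMod.val_one, offset]
  rcases Nat.lt_or_ge (offset i t + 1) n with hlt' | hge
  · left
    rw [h, Nat.mod_eq_of_lt hlt']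
  · have he : offset i t + 1 = n := by omega
    right
    exact ⟨he, by rw [h, he, Nat.mod_self]⟩

/-- Every offset from `i` is attained, and this determines the offset from `j` as well. -/
theorem exists_offset_eq [NeZero n] (i j : ZMod n) {c : ℕ} (hc : c < n) :
    ∃ t, offset i t = c ∧ offset j t < n ∧
      (offset j t + offset i j = c ∨ offset j t + offset i j = c + n) := by
  have hi : offset i (i + (c : ZMod n)) = c := by
    rw [offset, add_sub_cancel_left, ZMod.val_natCast_of_lt hc]
  refine ⟨i + c, hi, offset_lt _ _, ?_⟩
  have hmod : offset i (i + (c : ZMod n))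
      = (offset j (i + (c : ZMod n)) + offset i j) % n := by
    simp only [offset, ← ZMod.val_add]
    congr 1
    ring
  have h1 := offset_lt j (i + (c : ZMod n))
  have h2 := offset_lt i j
  rw [hi] at hmod
  rcases Nat.lt_or_ge (offset j (i + (c : ZMod n)) + offset i j) n with h | h
  · left
    rwa [Nat.mod_eq_of_lt h, eq_comm] at hmod
  · right
    rw [Nat.mod_eq_sub_mod h, Nat.mod_eq_of_lt (by omega)] at hmod
    omega

/-- The function on vertices given on each of the four families by a function of the offset
from `i`. -/
def profile (i : ZMod n) (P Q R S : ℕ → ℕ) : HCLVertex n → ℕ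
  | .p t => P (offset i t)
  | .q t => Q (offset i t)
  | .r t => R (offset i t)
  | .s t => S (offset i t)

end HCLVertex

open HCLVertex

section Distances

variable {n : ℕ}

theorem delta_adj_p_p (hn : 2 ≤ n) (t : ZMod n) : (Delta n).Adj (.p t) (.p (t + 1)) := by
  have : Fact (1 < n) := ⟨hn⟩
  simp [Delta, gammaRel]

theorem delta_adj_p_q (t : ZMod n) : (Delta n).Adj (.p t) (.q t) := by simp [Delta, gammaRel]

theorem delta_adj_q_r (t : ZMod n) : (Delta n).Adj (.q t) (.r t) := by simp [Delta, gammaRel]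

theorem delta_adj_r_s (t : ZMod n) : (Delta n).Adj (.r t) (.s t) := by simp [Delta, gammaRel]

theorem delta_adj_s_r (t : ZMod n) : (Delta n).Adj (.s t) (.r (t + 1)) := by
  simp [Delta, gammaRel]

theorem delta_adj_r_q (t : ZMod n) : (Delta n).Adj (.r t) (.q (t + 1)) := by
  simp [Delta, deltaRel]

/-- A profile satisfying the local conditions computes the distance to `a` in `Δ_n`. -/
theorem delta_dist_eq_profile (hn : 2 ≤ n) {a : HCLVertex n} (i : ZMod n) (P Q R S : ℕ → ℕ)
    (ha : profile i P Q R S a = 0) (hz : ∀ v, profile i P Q R S v = 0 → v = a)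
    (hl : ∀ x y, x < n → y < n → (y = x + 1 ∨ (x + 1 = n ∧ y = 0)) →
      (P x ≤ P y + 1 ∧ P y ≤ P x + 1) ∧ (P x ≤ Q x + 1 ∧ Q x ≤ P x + 1) ∧
      (Q x ≤ R x + 1 ∧ R x ≤ Q x + 1) ∧ (R x ≤ S x + 1 ∧ S x ≤ R x + 1) ∧
      (S x ≤ R y + 1 ∧ R y ≤ S x + 1) ∧ (R x ≤ Q y + 1 ∧ Q y ≤ R x + 1))
    (hd : ∀ w x y, w < n → x < n → y < n → (x = w + 1 ∨ (w + 1 = n ∧ x = 0)) →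
      (y = x + 1 ∨ (x + 1 = n ∧ y = 0)) →
      (P x = 0 ∨ P w < P x ∨ P y < P x ∨ Q x < P x) ∧
      (Q x = 0 ∨ P x < Q x ∨ R x < Q x ∨ R w < Q x) ∧
      (R x = 0 ∨ Q x < R x ∨ Q y < R x ∨ S x < R x ∨ S w < R x) ∧
      (S x = 0 ∨ R x < S x ∨ R y < S x)) (v : HCLVertex n) :
    (Delta n).dist a v = profile i P Q R S v := by
  have : NeZero n := ⟨by omega⟩
  have hl' := fun t => hl _ _ (offset_lt i t) (offset_lt i (t + 1)) (offset_succ hn i t)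
  refine SimpleGraph.dist_eq_of_lipschitz_of_descent _ ha hz ?_ ?_ v
  · have key : ∀ u v, gammaRel n u v ∨ deltaRel n u v →
        profile i P Q R S v ≤ profile i P Q R S u + 1 ∧
        profile i P Q R S u ≤ profile i P Q R S v + 1 := by
      rintro (t | t | t | t) (u | u | u | u) h <;> simp only [gammaRel, deltaRel, or_false,
        false_or, or_self] at h <;>
        simp only [profile, h] <;> have := hl' t <;> omega
    intro u v huv
    rw [Delta, SimpleGraph.fromRel_adj] at huv
    rcases huv.2 with h | h
    · exact (key _ _ h).1
    · exact (key _ _ h).2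
  · have hd' := fun t => hd _ _ _ (offset_lt i (t - 1)) (offset_lt i t) (offset_lt i (t + 1))
      (by simpa using offset_succ hn i (t - 1)) (offset_succ hn i t)
    rintro (t | t | t | t) h <;> obtain ⟨h1, h2, h3, h4⟩ := hd' t <;> simp only [profile] at h
    · rcases h1 with h1 | h1 | h1 | h1
      · omega
      · exact ⟨.p (t - 1), by simpa using delta_adj_p_p hn (t - 1), h1⟩
      · exact ⟨.p (t + 1), (delta_adj_p_p hn t).symm, h1⟩
      · exact ⟨.q t, (delta_adj_p_q t).symm, h1⟩
    · rcases h2 with h2 | h2 | h2 | h2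
      · omega
      · exact ⟨.p t, delta_adj_p_q t, h2⟩
      · exact ⟨.r t, (delta_adj_q_r t).symm, h2⟩
      · exact ⟨.r (t - 1), by have := delta_adj_r_q (t - 1); rwa [sub_add_cancel] at this, h2⟩
    · rcases h3 with h3 | h3 | h3 | h3 | h3
      · omega
      · exact ⟨.q t, delta_adj_q_r t, h3⟩
      · exact ⟨.q (t + 1), (delta_adj_r_q t).symm, h3⟩
      · exact ⟨.s t, (delta_adj_r_s t).symm, h3⟩
      · exact ⟨.s (t - 1), by have := delta_adj_s_r (t - 1); rwa [sub_add_cancel] at this, h3⟩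
    · rcases h4 with h4 | h4 | h4
      · omega
      · exact ⟨.r t, delta_adj_r_s t, h4⟩
      · exact ⟨.r (t + 1), (delta_adj_s_r t).symm, h4⟩

theorem delta_dist_p (hn : 6 ≤ n) (i : ZMod n) (v : HCLVertex n) :
    (Delta n).dist (.p i) v = profile i
      (fun x => min x (n - x)) (fun x => min x (n - x) + 1) (fun x => min x (n - 1 - x) + 2)
      (fun x => max (min (x + 1) (n - 1 - x) + 2) 3) v := by
  have : NeZero n := ⟨by omega⟩
  refine delta_dist_eq_profile (by omega) i _ _ _ _ (by simp [profile, offset_self]) ?_ ?_ ?_ v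
  · rintro (t | t | t | t) h <;> have := offset_lt i t <;> simp only [profile] at h
    · rw [eq_of_offset_eq_zero (i := i) (t := t) (by omega)]
    all_goals omega
  · rintro x y hx hy (rfl | ⟨h, rfl⟩) <;> refine ⟨?_, ?_, ?_, ?_, ?_, ?_⟩ <;> omega
  · rintro w x y hw hx hy (rfl | ⟨h, rfl⟩) (rfl | ⟨h', rfl⟩) <;>
      refine ⟨?_, ?_, ?_, ?_⟩ <;> omega

theorem delta_dist_q (hn : 6 ≤ n) (i : ZMod n) (v : HCLVertex n) :
    (Delta n).dist (.q i) v = profile i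
      (fun x => min x (n - x) + 1) (fun x => min (2 * min x (n - x)) (min x (n - x) + 2))
      (fun x => min (2 * min x (n - 1 - x) + 1) (min x (n - 1 - x) + 3))
      (fun x => max 2 (min (2 * min (x + 1) (n - 1 - x)) (min (x + 1) (n - 1 - x) + 3))) v := by
  have : NeZero n := ⟨by omega⟩
  refine delta_dist_eq_profile (by omega) i _ _ _ _ (by simp [profile, offset_self]) ?_ ?_ ?_ v
  · rintro (t | t | t | t) h <;> have := offset_lt i t <;> simp only [profile] at h
    · omega
    · rw [eq_of_offset_eq_zero (i := i) (t := t) (by omega)]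
    all_goals omega
  · rintro x y hx hy (rfl | ⟨h, rfl⟩) <;> refine ⟨?_, ?_, ?_, ?_, ?_, ?_⟩ <;> omega
  · rintro w x y hw hx hy (rfl | ⟨h, rfl⟩) (rfl | ⟨h', rfl⟩) <;>
      refine ⟨?_, ?_, ?_, ?_⟩ <;> omega

set_option maxHeartbeats 1000000 in
theorem delta_dist_s (hn : 6 ≤ n) (i : ZMod n) (v : HCLVertex n) :
    (Delta n).dist (.s i) v = profile i
      (fun x => max (min (x - 1) (n + 1 - x) + 2) 3)
      (fun x => max 2 (min (2 * min (x - 1) (n + 1 - x)) (min (x - 1) (n + 1 - x) + 3)))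
      (fun x => min (2 * min (x - 1) (n - x) + 1) (min (x - 1) (n - x) + 4))
      (fun x => min (2 * min x (n - x)) (min x (n - x) + 4)) v := by
  have : NeZero n := ⟨by omega⟩
  refine delta_dist_eq_profile (by omega) i _ _ _ _ (by simp [profile, offset_self]) ?_ ?_ ?_ v
  · rintro (t | t | t | t) h <;> have := offset_lt i t <;> simp only [profile] at h
    · omega
    · omega
    · omega
    · rw [eq_of_offset_eq_zero (i := i) (t := t) (by omega)]
  · rintro x y hx hy (rfl | ⟨h, rfl⟩) <;> refine ⟨?_, ?_, ?_, ?_, ?_, ?_⟩ <;> omega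
  · rintro w x y hw hx hy (rfl | ⟨h, rfl⟩) (rfl | ⟨h', rfl⟩) <;>
      refine ⟨?_, ?_, ?_, ?_⟩ <;> omega

/-- The vertices `a` and `b` leave some pair of distinct vertices undistinguished. -/
def Unresolved (a b : HCLVertex n) : Prop :=
  ∃ u v, u ≠ v ∧ (Delta n).dist a u = (Delta n).dist a v ∧ (Delta n).dist b u = (Delta n).dist b v

theorem Unresolved.symm {a b : HCLVertex n} : Unresolved a b → Unresolved b a := by
  rintro ⟨u, v, huv, ha, hb⟩
  exact ⟨u, v, huv, hb, ha⟩

/-- A vertex of degree four resolves nothing among its neighbours, and their distances to any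
other vertex take at most three values. -/
theorem unresolved_r (hn : 6 ≤ n) (i : ZMod n) (b : HCLVertex n) : Unresolved (.r i) b := by
  have : Fact (1 < n) := ⟨by omega⟩
  have h1 : (Delta n).Adj (.r i) (.q i) := (delta_adj_q_r i).symm
  have h2 : (Delta n).Adj (.r i) (.q (i + 1)) := delta_adj_r_q i
  have h3 : (Delta n).Adj (.r i) (.s i) := delta_adj_r_s i
  have h4 : (Delta n).Adj (.r i) (.s (i - 1)) := by
    have := (delta_adj_s_r (i - 1)).symm
    rwa [sub_add_cancel] at this
  have d1 := SimpleGraph.dist_eq_one_iff_adj.mpr h1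
  have d2 := SimpleGraph.dist_eq_one_iff_adj.mpr h2
  have d3 := SimpleGraph.dist_eq_one_iff_adj.mpr h3
  have d4 := SimpleGraph.dist_eq_one_iff_adj.mpr h4
  by_contra hcon
  have key : ∀ u v, u ≠ v → (Delta n).dist (.r i) u = 1 → (Delta n).dist (.r i) v = 1 →
      (Delta n).dist b u ≠ (Delta n).dist b v := fun u v huv hu hv h =>
    hcon ⟨u, v, huv, hu.trans hv.symm, h⟩
  have e12 := key _ _ (by simp) d1 d2
  have e13 := key _ _ (by simp) d1 d3
  have e14 := key _ _ (by simp) d1 d4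
  have e23 := key _ _ (by simp) d2 d3
  have e24 := key _ _ (by simp) d2 d4
  have e34 := key _ _ (by simp [eq_sub_iff_add_eq]) d3 d4
  have b1 := h1.diff_dist_adj (u := b)
  have b2 := h2.diff_dist_adj (u := b)
  have b3 := h3.diff_dist_adj (u := b)
  have b4 := h4.diff_dist_adj (u := b)
  omega

theorem unresolved_p_p (hn : 6 ≤ n) {i j : ZMod n} (hij : i ≠ j) :
    Unresolved (.p i) (.p j) := by
  have : NeZero n := ⟨by omega⟩
  have hk := offset_lt i j
  have hk0 : offset i j ≠ 0 := fun h => hij (eq_of_offset_eq_zero h).symm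
  have hv := fun c (hc : c < n) => exists_offset_eq i j hc
  set k := offset i j
  have hcases : k < n / 2 ∨
      (n + 1) / 2 < k ∨
      n / 2 < k ∧ k = (n + 1) / 2 ∨
      k = n / 2 ∧ n / 2 < (n + 1) / 2 ∨
      k = n / 2 ∧ n / 2 = (n + 1) / 2 := by omega
  rcases hcases with h | h | h | h | h
  · obtain ⟨t, ht, ht1, ht2⟩ := hv (k + (n + 1) / 2) (by omega)
    refine ⟨.q t, .r t, by simp, ?_, ?_⟩ <;>
      simp only [delta_dist_p hn, profile] <;> clear hv <;> omega
  · obtain ⟨t, ht, ht1, ht2⟩ := hv ((n + 1) / 2) (by omega)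
    refine ⟨.q t, .r t, by simp, ?_, ?_⟩ <;>
      simp only [delta_dist_p hn, profile] <;> clear hv <;> omega
  · obtain ⟨t, ht, ht1, ht2⟩ := hv (k - 1) (by omega)
    obtain ⟨u, hu, hu1, hu2⟩ := hv k (by omega)
    refine ⟨.q t, .r u, by simp, ?_, ?_⟩ <;>
      simp only [delta_dist_p hn, profile] <;> clear hv <;> omega
  · obtain ⟨t, ht, ht1, ht2⟩ := hv (k + 1) (by omega)
    obtain ⟨u, hu, hu1, hu2⟩ := hv (k - 1) (by omega)
    refine ⟨.q t, .r u, by simp, ?_, ?_⟩ <;>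
      simp only [delta_dist_p hn, profile] <;> clear hv <;> omega
  · obtain ⟨t, ht, ht1, ht2⟩ := hv (k - 1) (by omega)
    obtain ⟨u, hu, hu1, hu2⟩ := hv k (by omega)
    refine ⟨.r t, .r u, fun h => by cases h; omega, ?_, ?_⟩ <;>
      simp only [delta_dist_p hn, profile] <;> clear hv <;> omega

theorem unresolved_p_q (hn : 6 ≤ n) {i j : ZMod n} :
    Unresolved (.p i) (.q j) := by
  have : NeZero n := ⟨by omega⟩
  have hk := offset_lt i j
  have hv := fun c (hc : c < n) => exists_offset_eq i j hc
  set k := offset i j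
  have hcases : k < n / 2 ∨
      (n + 1) / 2 < k ∨
      n / 2 < k ∧ k = (n + 1) / 2 ∨
      k = n / 2 ∧ n / 2 < (n + 1) / 2 ∨
      k = n / 2 ∧ n / 2 = (n + 1) / 2 := by omega
  rcases hcases with h | h | h | h | h
  · obtain ⟨t, ht, ht1, ht2⟩ := hv (k + (n + 1) / 2) (by omega)
    refine ⟨.q t, .r t, by simp, ?_, ?_⟩ <;>
      simp only [delta_dist_p hn, delta_dist_q hn, profile] <;> clear hv <;> omega
  · obtain ⟨t, ht, ht1, ht2⟩ := hv (k + n / 2 - n) (by omega)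
    obtain ⟨u, hu, hu1, hu2⟩ := hv (k + n / 2 - n - 1) (by omega)
    refine ⟨.p t, .q u, by simp, ?_, ?_⟩ <;>
      simp only [delta_dist_p hn, delta_dist_q hn, profile] <;> clear hv <;> omega
  · obtain ⟨t, ht, ht1, ht2⟩ := hv (k - 1) (by omega)
    obtain ⟨u, hu, hu1, hu2⟩ := hv k (by omega)
    refine ⟨.q t, .s u, by simp, ?_, ?_⟩ <;>
      simp only [delta_dist_p hn, delta_dist_q hn, profile] <;> clear hv <;> omega
  · obtain ⟨t, ht, ht1, ht2⟩ := hv (k + 1) (by omega)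
    obtain ⟨u, hu, hu1, hu2⟩ := hv (k - 1) (by omega)
    refine ⟨.p t, .q u, by simp, ?_, ?_⟩ <;>
      simp only [delta_dist_p hn, delta_dist_q hn, profile] <;> clear hv <;> omega
  · obtain ⟨t, ht, ht1, ht2⟩ := hv (k - 1) (by omega)
    obtain ⟨u, hu, hu1, hu2⟩ := hv k (by omega)
    refine ⟨.r t, .r u, fun h => by cases h; omega, ?_, ?_⟩ <;>
      simp only [delta_dist_p hn, delta_dist_q hn, profile] <;> clear hv <;> omega

theorem unresolved_p_s (hn : 6 ≤ n) {i j : ZMod n} :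
    Unresolved (.p i) (.s j) := by
  have : NeZero n := ⟨by omega⟩
  have hk := offset_lt i j
  have hv := fun c (hc : c < n) => exists_offset_eq i j hc
  set k := offset i j
  have hcases : 0 < k ∧ k < n / 2 ∨
      n / 2 ≤ k ∧ k + 3 ≤ n ∨
      k + 2 = n ∨
      k + 1 = n ∨
      k = 0 ∧ n < 8 ∨
      k = 0 ∧ 8 ≤ n := by omega
  rcases hcases with h | h | h | h | h | h
  · obtain ⟨t, ht, ht1, ht2⟩ := hv (k + 1) (by omega)
    obtain ⟨u, hu, hu1, hu2⟩ := hv (k - 1) (by omega)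
    refine ⟨.p t, .r u, by simp, ?_, ?_⟩ <;>
      simp only [delta_dist_p hn, delta_dist_s hn, profile] <;> clear hv <;> omega
  · obtain ⟨t, ht, ht1, ht2⟩ := hv (k + 1) (by omega)
    refine ⟨.q t, .s t, by simp, ?_, ?_⟩ <;>
      simp only [delta_dist_p hn, delta_dist_s hn, profile] <;> clear hv <;> omega
  · obtain ⟨t, ht, ht1, ht2⟩ := hv k (by omega)
    obtain ⟨u, hu, hu1, hu2⟩ := hv (k + 1) (by omega)
    refine ⟨.q t, .s u, by simp, ?_, ?_⟩ <;>
      simp only [delta_dist_p hn, delta_dist_s hn, profile] <;> clear hv <;> omega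
  · obtain ⟨t, ht, ht1, ht2⟩ := hv 0 (by omega)
    obtain ⟨u, hu, hu1, hu2⟩ := hv k (by omega)
    refine ⟨.r t, .r u, fun h => by cases h; omega, ?_, ?_⟩ <;>
      simp only [delta_dist_p hn, delta_dist_s hn, profile] <;> clear hv <;> omega
  · obtain ⟨t, ht, ht1, ht2⟩ := hv 2 (by omega)
    obtain ⟨u, hu, hu1, hu2⟩ := hv (n - 1) (by omega)
    refine ⟨.q t, .s u, by simp, ?_, ?_⟩ <;>
      simp only [delta_dist_p hn, delta_dist_s hn, profile] <;> clear hv <;> omega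
  · obtain ⟨t, ht, ht1, ht2⟩ := hv ((n + 1) / 2 + 1) (by omega)
    refine ⟨.q t, .r t, by simp, ?_, ?_⟩ <;>
      simp only [delta_dist_p hn, delta_dist_s hn, profile] <;> clear hv <;> omega

theorem unresolved_q_q (hn : 6 ≤ n) {i j : ZMod n} (hij : i ≠ j) :
    Unresolved (.q i) (.q j) := by
  have : NeZero n := ⟨by omega⟩
  have hk := offset_lt i j
  have hk0 : offset i j ≠ 0 := fun h => hij (eq_of_offset_eq_zero h).symm
  have hv := fun c (hc : c < n) => exists_offset_eq i j hc
  set k := offset i j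
  have hcases : 0 < k ∧ k ≤ n / 2 - 3 ∨
      (n + 1) / 2 + 3 ≤ k ∨
      3 ≤ k ∧ k < n / 2 ∨
      (n + 1) / 2 < k ∧ k + 3 ≤ n ∨
      n / 2 < k ∧ k = (n + 1) / 2 ∨
      k = n / 2 ∧ n / 2 < (n + 1) / 2 ∨
      k = n / 2 ∧ n / 2 = (n + 1) / 2 ∨
      k = 2 ∨
      k + 2 = n ∨
      k = 1 ∨
      k + 1 = n := by omega
  rcases hcases with h | h | h | h | h | h | h | h | h | h | h
  · obtain ⟨t, ht, ht1, ht2⟩ := hv (k + (n + 1) / 2) (by omega)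
    refine ⟨.q t, .r t, by simp, ?_, ?_⟩ <;>
      simp only [delta_dist_q hn, profile] <;> clear hv <;> omega
  · obtain ⟨t, ht, ht1, ht2⟩ := hv ((n + 1) / 2) (by omega)
    refine ⟨.q t, .r t, by simp, ?_, ?_⟩ <;>
      simp only [delta_dist_q hn, profile] <;> clear hv <;> omega
  · obtain ⟨t, ht, ht1, ht2⟩ := hv (k + 1) (by omega)
    obtain ⟨u, hu, hu1, hu2⟩ := hv (k - 1) (by omega)
    refine ⟨.q t, .s u, by simp, ?_, ?_⟩ <;>
      simp only [delta_dist_q hn, profile] <;> clear hv <;> omega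
  · obtain ⟨t, ht, ht1, ht2⟩ := hv (k - 1) (by omega)
    refine ⟨.q t, .s t, by simp, ?_, ?_⟩ <;>
      simp only [delta_dist_q hn, profile] <;> clear hv <;> omega
  · obtain ⟨t, ht, ht1, ht2⟩ := hv (k - 1) (by omega)
    obtain ⟨u, hu, hu1, hu2⟩ := hv (k + 1) (by omega)
    refine ⟨.p t, .q u, by simp, ?_, ?_⟩ <;>
      simp only [delta_dist_q hn, profile] <;> clear hv <;> omega
  · obtain ⟨t, ht, ht1, ht2⟩ := hv (k + 1) (by omega)
    obtain ⟨u, hu, hu1, hu2⟩ := hv (k - 1) (by omega)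
    refine ⟨.p t, .q u, by simp, ?_, ?_⟩ <;>
      simp only [delta_dist_q hn, profile] <;> clear hv <;> omega
  · obtain ⟨t, ht, ht1, ht2⟩ := hv (k - 1) (by omega)
    obtain ⟨u, hu, hu1, hu2⟩ := hv k (by omega)
    refine ⟨.r t, .r u, fun h => by cases h; omega, ?_, ?_⟩ <;>
      simp only [delta_dist_q hn, profile] <;> clear hv <;> omega
  · obtain ⟨t, ht, ht1, ht2⟩ := hv 0 (by omega)
    refine ⟨.p t, .r t, by simp, ?_, ?_⟩ <;>
      simp only [delta_dist_q hn, profile] <;> clear hv <;> omega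
  · obtain ⟨t, ht, ht1, ht2⟩ := hv k (by omega)
    refine ⟨.p t, .r t, by simp, ?_, ?_⟩ <;>
      simp only [delta_dist_q hn, profile] <;> clear hv <;> omega
  · obtain ⟨t, ht, ht1, ht2⟩ := hv (k + 1) (by omega)
    obtain ⟨u, hu, hu1, hu2⟩ := hv k (by omega)
    refine ⟨.q t, .s u, by simp, ?_, ?_⟩ <;>
      simp only [delta_dist_q hn, profile] <;> clear hv <;> omega
  · obtain ⟨t, ht, ht1, ht2⟩ := hv 1 (by omega)
    obtain ⟨u, hu, hu1, hu2⟩ := hv 0 (by omega)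
    refine ⟨.q t, .s u, by simp, ?_, ?_⟩ <;>
      simp only [delta_dist_q hn, profile] <;> clear hv <;> omega

theorem unresolved_q_s (hn : 6 ≤ n) {i j : ZMod n} :
    Unresolved (.q i) (.s j) := by
  have : NeZero n := ⟨by omega⟩
  have hk := offset_lt i j
  have hv := fun c (hc : c < n) => exists_offset_eq i j hc
  set k := offset i j
  have hcases : k = 0 ∧ 8 ≤ n ∨
      k = 0 ∧ n < 8 ∨
      (k = 1 ∨ k = 2) ∨
      3 ≤ k ∧ k < n / 2 ∨
      n / 2 ≤ k ∧ (n + 1) / 2 - 1 ≤ k ∧ k + 5 ≤ n ∨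
      n / 2 ≤ k ∧ n < k + 5 ∧ k + 3 ≤ n ∨
      n < k + 3 := by omega
  rcases hcases with h | h | h | h | h | h | h
  · obtain ⟨t, ht, ht1, ht2⟩ := hv ((n + 1) / 2 + 1) (by omega)
    refine ⟨.q t, .r t, by simp, ?_, ?_⟩ <;>
      simp only [delta_dist_q hn, delta_dist_s hn, profile] <;> clear hv <;> omega
  · obtain ⟨t, ht, ht1, ht2⟩ := hv ((n + 1) / 2 + 1) (by omega)
    obtain ⟨u, hu, hu1, hu2⟩ := hv ((n + 1) / 2) (by omega)
    refine ⟨.q t, .s u, by simp, ?_, ?_⟩ <;>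
      simp only [delta_dist_q hn, delta_dist_s hn, profile] <;> clear hv <;> omega
  · obtain ⟨t, ht, ht1, ht2⟩ := hv 1 (by omega)
    obtain ⟨u, hu, hu1, hu2⟩ := hv 0 (by omega)
    refine ⟨.q t, .s u, by simp, ?_, ?_⟩ <;>
      simp only [delta_dist_q hn, delta_dist_s hn, profile] <;> clear hv <;> omega
  · obtain ⟨t, ht, ht1, ht2⟩ := hv (k + 1) (by omega)
    obtain ⟨u, hu, hu1, hu2⟩ := hv (k - 1) (by omega)
    refine ⟨.p t, .r u, by simp, ?_, ?_⟩ <;>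
      simp only [delta_dist_q hn, delta_dist_s hn, profile] <;> clear hv <;> omega
  · obtain ⟨t, ht, ht1, ht2⟩ := hv (k + 1) (by omega)
    refine ⟨.q t, .s t, by simp, ?_, ?_⟩ <;>
      simp only [delta_dist_q hn, delta_dist_s hn, profile] <;> clear hv <;> omega
  · obtain ⟨t, ht, ht1, ht2⟩ := hv (n - 1) (by omega)
    obtain ⟨u, hu, hu1, hu2⟩ := hv (n - 2) (by omega)
    refine ⟨.q t, .s u, by simp, ?_, ?_⟩ <;>
      simp only [delta_dist_q hn, delta_dist_s hn, profile] <;> clear hv <;> omega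
  · obtain ⟨t, ht, ht1, ht2⟩ := hv 1 (by omega)
    obtain ⟨u, hu, hu1, hu2⟩ := hv 0 (by omega)
    refine ⟨.q t, .s u, by simp, ?_, ?_⟩ <;>
      simp only [delta_dist_q hn, delta_dist_s hn, profile] <;> clear hv <;> omega

set_option maxHeartbeats 1000000 in
theorem unresolved_s_s (hn : 6 ≤ n) {i j : ZMod n} (hij : i ≠ j) :
    Unresolved (.s i) (.s j) := by
  have : NeZero n := ⟨by omega⟩
  have hk := offset_lt i j
  have hk0 : offset i j ≠ 0 := fun h => hij (eq_of_offset_eq_zero h).symm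
  have hv := fun c (hc : c < n) => exists_offset_eq i j hc
  set k := offset i j
  have hcases : 0 < k ∧ k + 4 ≤ n / 2 ∨
      (n + 1) / 2 ≤ k ∧ k + 5 ≤ n ∨
      n - 5 ≤ k ∧ k + 3 ≤ n ∨
      5 ≤ k ∧ k ≤ n / 2 ∨
      (k + 2 = n ∨ k + 1 = n) ∨
      2 ≤ k ∧ k ≤ 4 ∨
      k = 1 ∧ n / 2 < 5 := by omega
  rcases hcases with h | h | h | h | h | h | h
  · obtain ⟨t, ht, ht1, ht2⟩ := hv (n / 2 + 1) (by omega)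
    obtain ⟨u, hu, hu1, hu2⟩ := hv (n / 2) (by omega)
    refine ⟨.p t, .q u, by simp, ?_, ?_⟩ <;>
      simp only [delta_dist_s hn, profile] <;> clear hv <;> omega
  · obtain ⟨t, ht, ht1, ht2⟩ := hv (k + 1) (by omega)
    refine ⟨.q t, .s t, by simp, ?_, ?_⟩ <;>
      simp only [delta_dist_s hn, profile] <;> clear hv <;> omega
  · obtain ⟨t, ht, ht1, ht2⟩ := hv (n - 1) (by omega)
    obtain ⟨u, hu, hu1, hu2⟩ := hv (n - 2) (by omega)
    refine ⟨.q t, .s u, by simp, ?_, ?_⟩ <;>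
      simp only [delta_dist_s hn, profile] <;> clear hv <;> omega
  · obtain ⟨t, ht, ht1, ht2⟩ := hv (k + 1) (by omega)
    obtain ⟨u, hu, hu1, hu2⟩ := hv (k - 1) (by omega)
    refine ⟨.p t, .r u, by simp, ?_, ?_⟩ <;>
      simp only [delta_dist_s hn, profile] <;> clear hv <;> omega
  · obtain ⟨t, ht, ht1, ht2⟩ := hv k (by omega)
    obtain ⟨u, hu, hu1, hu2⟩ := hv (k - 1) (by omega)
    refine ⟨.q t, .s u, by simp, ?_, ?_⟩ <;>
      simp only [delta_dist_s hn, profile] <;> clear hv <;> omega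
  · obtain ⟨t, ht, ht1, ht2⟩ := hv k (by omega)
    obtain ⟨u, hu, hu1, hu2⟩ := hv (k - 1) (by omega)
    refine ⟨.q t, .s u, by simp, ?_, ?_⟩ <;>
      simp only [delta_dist_s hn, profile] <;> clear hv <;> omega
  · obtain ⟨t, ht, ht1, ht2⟩ := hv (n / 2) (by omega)
    obtain ⟨u, hu, hu1, hu2⟩ := hv (n / 2 - 1) (by omega)
    refine ⟨.q t, .s u, by simp, ?_, ?_⟩ <;>
      simp only [delta_dist_s hn, profile] <;> clear hv <;> omega

end Distances

theorem delta_no_two_element_resolving (n : ℕ) (hn : 6 ≤ n) :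
    ∀ W : Finset (HCLVertex n), W.card = 2 → ¬ IsResolving (Delta n) ↑W := by
  intro W hW hres
  obtain ⟨a, b, hab, rfl⟩ := Finset.card_eq_two.mp hW
  have hun : Unresolved a b := by
    rcases a with i | i | i | i <;> rcases b with j | j | j | j
    · exact unresolved_p_p hn (fun h => hab (h ▸ rfl))
    · exact unresolved_p_q hn
    · exact (unresolved_r hn _ _).symm
    · exact unresolved_p_s hn
    · exact (unresolved_p_q hn).symm
    · exact unresolved_q_q hn (fun h => hab (h ▸ rfl))
    · exact (unresolved_r hn _ _).symm
    · exact unresolved_q_s hn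
    · exact unresolved_r hn _ _
    · exact unresolved_r hn _ _
    · exact unresolved_r hn _ _
    · exact unresolved_r hn _ _
    · exact (unresolved_p_s hn).symm
    · exact (unresolved_q_s hn).symm
    · exact (unresolved_r hn _ _).symm
    · exact unresolved_s_s hn (fun h => hab (h ▸ rfl))
  obtain ⟨u, v, huv, ha, hb⟩ := hun
  obtain ⟨w, hw, hne⟩ := hres u v huv
  simp only [Finset.coe_insert, Finset.coe_singleton, Set.mem_insert_iff,
    Set.mem_singleton_iff] at hw
  rcases hw with rfl | rfl
  · exact hne ha
  · exact hne hb
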